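/- Let p be a prime, k a field of characteristic p, and A = k[x_1,…,x_n] graded by deg(x_i) = −1. Let f : M → N be a morphism of free p-DG A-modules such that M_n = N_n = 0 for all sufficiently large n. If f⊗_A k is a quasi-isomorphism of p-complexes (i.e. induces isomorphisms on {}_sH_• for all 1 ≤ s ≤ p−1), then f is a homotopy equivalence of p-DG A-modules. -/

import Mathlib

/-! Statement 17: Let `f : M → N` be a morphism of free `p`-DG `A`-modules with
`M_n = N_n = 0` for all large `n`.  If `f ⊗_A k` is a quasi-isomorphism of `p`-complexes
(isomorphisms on `ₛH` for all `1 ≤ s ≤ p-1`), then `f` is a homotopy equivalence of `p`-DG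
`A`-modules. -/

/-- The polynomial ring `A = k[x_1,…,x_n]` (graded by `deg x_i = -1` via the gradings below). -/
abbrev PolyA (n : ℕ) (k : Type) [Field k] : Type := MvPolynomial (Fin n) k

/-- A `p`-DG module over `A = k[x_1,…,x_n]` with `deg x_i = -1`: a graded `A`-module together
with an `A`-linear differential of degree `-1` satisfying `d ^ p = 0`. -/
structure PDG (p n : ℕ) (k : Type) [Field k] : Type 1 where
  X : Type
  [acg : AddCommGroup X]
  [modA : Module (PolyA n k) X]
  [modk : Module k X]
  [tower : IsScalarTower k (PolyA n k) X]
  d : X →ₗ[PolyA n k] X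
  gr : ℤ → Submodule k X
  internal : DirectSum.IsInternal gr
  x_deg : ∀ (i : Fin n) (m : ℤ), ∀ x ∈ gr m, (MvPolynomial.X i : PolyA n k) • x ∈ gr (m - 1)
  d_deg : ∀ m : ℤ, ∀ x ∈ gr m, d x ∈ gr (m - 1)
  d_pow : d ^ p = 0

attribute [instance] PDG.acg PDG.modA PDG.modk PDG.tower

namespace PDG
variable {p n : ℕ} {k : Type} [Field k] (M : PDG p n k)

/-- `M` is free as a graded `A`-module: it has a homogeneous `A`-basis. -/
def IsFree : Prop :=
  ∃ (ι : Type) (deg : ι → ℤ) (b : Module.Basis ι (PolyA n k) M.X), ∀ a, b a ∈ M.gr (deg a)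

/-- `M` is free and finitely generated as a graded `A`-module. -/
def IsFreeFG : Prop :=
  ∃ (ι : Type) (_ : Fintype ι) (deg : ι → ℤ) (b : Module.Basis ι (PolyA n k) M.X),
    ∀ a, b a ∈ M.gr (deg a)

/-- The submodule `(x_1,…,x_n)·M`, i.e. the kernel of `M → M ⊗_A k`. -/
noncomputable def IM : Submodule (PolyA n k) M.X :=
  (Ideal.span (Set.range (MvPolynomial.X : Fin n → PolyA n k))) • (⊤ : Submodule (PolyA n k) M.X)

/-- The differential as a `k`-linear map. -/
noncomputable def dk : M.X →ₗ[k] M.X := M.d.restrictScalars k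

/-- `(x_1,…,x_n)·M` as a `k`-subspace. -/
noncomputable def IMk : Submodule k M.X := M.IM.restrictScalars k

/-- The total homology `ₛH(M) = ker d^s / im d^{p-s}` as a `k`-vector space. -/
noncomputable abbrev H (s : ℕ) : Type :=
  ↥(LinearMap.ker (M.dk ^ s)) ⧸
    (LinearMap.range (M.dk ^ (p - s))).comap (LinearMap.ker (M.dk ^ s)).subtype

/-- The total homology `ₛH(M ⊗_A k)` as a `k`-vector space, presented as the subquotient
`ker(d̄^s) / im(d̄^{p-s})` of `M/IM` pulled back to `M`. -/
noncomputable abbrev HBar (s : ℕ) : Type :=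
  ↥(Submodule.comap (M.dk ^ s) M.IMk) ⧸
    (LinearMap.range (M.dk ^ (p - s)) ⊔ M.IMk).comap (Submodule.comap (M.dk ^ s) M.IMk).subtype

/-- `ₛH(M ⊗_A k) ≠ 0`. -/
def HBarNonzero (s : ℕ) : Prop :=
  ∃ x : M.X, (M.dk ^ s) x ∈ M.IMk ∧ x ∉ LinearMap.range (M.dk ^ (p - s)) ⊔ M.IMk

end PDG

section Homotopy

variable {R X Y Z : Type*} [CommRing R] [AddCommGroup X] [Module R X] [AddCommGroup Y] [Module R Y]
  [AddCommGroup Z] [Module R Z]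

/-- The null-homotopic map `∑ i, d ^ (q - i) ∘ h ∘ d ^ i` attached to `h : X → Y`, where
`q + 1` is the order of nilpotency of the differentials. -/
def nullHomotopicMap (q : ℕ) (dX : Module.End R X) (dY : Module.End R Y) (h : X →ₗ[R] Y) :
    X →ₗ[R] Y :=
  ∑ i ∈ Finset.range (q + 1), (dY ^ (q - i)) ∘ₗ h ∘ₗ (dX ^ i)

theorem nullHomotopicMap_apply (q : ℕ) (dX : Module.End R X) (dY : Module.End R Y)
    (h : X →ₗ[R] Y) (x : X) :
    nullHomotopicMap q dX dY h x =
      ∑ i ∈ Finset.range (q + 1), (dY ^ (q - i)) (h ((dX ^ i) x)) := by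
  simp [nullHomotopicMap]

theorem pow_comm_apply {dX : Module.End R X} {dY : Module.End R Y} {f : X →ₗ[R] Y}
    (hf : ∀ x, f (dX x) = dY (f x)) (i : ℕ) (x : X) : f ((dX ^ i) x) = (dY ^ i) (f x) := by
  induction i with
  | zero => simp
  | succ i ih => rw [pow_succ', pow_succ', Module.End.mul_apply, Module.End.mul_apply, hf, ih]

theorem comp_nullHomotopicMap {q : ℕ} {dX : Module.End R X} {dY : Module.End R Y}
    {dZ : Module.End R Z} {f : Y →ₗ[R] Z} (hf : ∀ y, f (dY y) = dZ (f y)) (h : X →ₗ[R] Y) :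
    f ∘ₗ nullHomotopicMap q dX dY h = nullHomotopicMap q dX dZ (f ∘ₗ h) := by
  ext x
  simp [nullHomotopicMap_apply, pow_comm_apply hf]

theorem nullHomotopicMap_comp {q : ℕ} {dX : Module.End R X} {dY : Module.End R Y}
    {dZ : Module.End R Z} {f : X →ₗ[R] Y} (hf : ∀ x, f (dX x) = dY (f x)) (h : Y →ₗ[R] Z) :
    nullHomotopicMap q dY dZ h ∘ₗ f = nullHomotopicMap q dX dZ (h ∘ₗ f) := by
  ext x
  simp [nullHomotopicMap_apply, pow_comm_apply hf]

/-- A null-homotopic map commutes with the differentials. -/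
theorem nullHomotopicMap_comm {q : ℕ} {dX : Module.End R X} {dY : Module.End R Y}
    (hX : dX ^ (q + 1) = 0) (hY : dY ^ (q + 1) = 0) (h : X →ₗ[R] Y) (x : X) :
    nullHomotopicMap q dX dY h (dX x) = dY (nullHomotopicMap q dX dY h x) := by
  have e : ∀ i, (dX ^ i) (dX x) = (dX ^ (i + 1)) x := fun i => by
    rw [pow_succ, Module.End.mul_apply]
  have e' : ∀ i y, dY ((dY ^ i) y) = (dY ^ (i + 1)) y := fun i y => by
    rw [pow_succ', Module.End.mul_apply]
  rw [nullHomotopicMap_apply, nullHomotopicMap_apply, map_sum, Finset.sum_range_succ,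
    Finset.sum_range_succ']
  simp only [e, e', hX, hY, Nat.sub_zero, LinearMap.zero_apply, map_zero]
  congr 1
  refine Finset.sum_congr rfl fun i hi => ?_
  rw [Finset.mem_range] at hi
  rw [show q - (i + 1) + 1 = q - i by omega]

end Homotopy

section FreeExtension

variable {R N : Type*} [CommRing R] [AddCommGroup N] [Module R N]

/-- The shift on `N ^ (q + 1)`, viewed as `R[d]/(d ^ (q + 1)) ⊗ N` with `d` acting on the left. -/
def shiftEnd (R N : Type*) [CommRing R] [AddCommGroup N] [Module R N] (q : ℕ) :
    Module.End R (Fin (q + 1) → N) where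
  toFun v := Fin.cons 0 fun j => v j.castSucc
  map_add' v w := by
    ext i
    refine Fin.cases ?_ (fun j => ?_) i <;> simp
  map_smul' a v := by
    ext i
    refine Fin.cases ?_ (fun j => ?_) i <;> simp

@[simp]
theorem shiftEnd_zero {q : ℕ} (v : Fin (q + 1) → N) : shiftEnd R N q v 0 = 0 := rfl

@[simp]
theorem shiftEnd_succ {q : ℕ} (v : Fin (q + 1) → N) (j : Fin q) :
    shiftEnd R N q v j.succ = v j.castSucc := rfl

theorem shiftEnd_pow_apply {q : ℕ} (v : Fin (q + 1) → N) (j : ℕ) (i : Fin (q + 1)) :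
    (shiftEnd R N q ^ j) v i = if j ≤ (i : ℕ) then v ⟨i - j, by omega⟩ else 0 := by
  induction j generalizing i with
  | zero => simp
  | succ j ih =>
    rw [pow_succ', Module.End.mul_apply]
    refine Fin.cases ?_ (fun l => ?_) i
    · simp
    · rw [shiftEnd_succ, ih]
      simp

theorem shiftEnd_pow_eq_zero (q : ℕ) : shiftEnd R N q ^ (q + 1) = 0 := by
  refine LinearMap.ext fun v => funext fun i => ?_
  rw [shiftEnd_pow_apply, if_neg (by omega)]
  rfl

/-- The contracting homotopy of the shift. -/
def shiftContraction (R N : Type*) [CommRing R] [AddCommGroup N] [Module R N] (q : ℕ) :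
    Module.End R (Fin (q + 1) → N) :=
  LinearMap.single R (fun _ : Fin (q + 1) => N) 0 ∘ₗ LinearMap.proj (Fin.last q)

theorem nullHomotopicMap_shiftContraction (q : ℕ) :
    nullHomotopicMap q (shiftEnd R N q) (shiftEnd R N q) (shiftContraction R N q) =
      LinearMap.id := by
  refine LinearMap.ext fun v => funext fun i => ?_
  rw [nullHomotopicMap_apply, Finset.sum_apply, Finset.sum_eq_single (q - (i : ℕ))]
  · rw [shiftEnd_pow_apply, if_pos (by omega)]
    have h0 : (⟨(i : ℕ) - (q - (q - (i : ℕ))), by omega⟩ : Fin (q + 1)) = 0 := by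
      ext; simp; omega
    have h1 : (⟨q - (q - (i : ℕ)), by omega⟩ : Fin (q + 1)) = i := by
      ext; simp; omega
    rw [h0]
    simp [shiftContraction, shiftEnd_pow_apply, h1]
  · intro j hj hne
    rw [Finset.mem_range] at hj
    rw [shiftEnd_pow_apply]
    split_ifs with h
    · have h0 : (⟨(i : ℕ) - (q - j), by omega⟩ : Fin (q + 1)) ≠ 0 := by
        intro h'
        have := congrArg Fin.val h'
        simp at this
        omega
      simp [shiftContraction, Pi.single_eq_of_ne h0]
    · rfl
  · intro h
    exact absurd (Finset.mem_range.2 (by omega)) h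

/-- The action map `R[d]/(d ^ (q + 1)) ⊗ N → N`. -/
def actionMap (q : ℕ) (d : Module.End R N) : (Fin (q + 1) → N) →ₗ[R] N :=
  ∑ i : Fin (q + 1), (d ^ (i : ℕ)) ∘ₗ LinearMap.proj i

theorem actionMap_apply (q : ℕ) (d : Module.End R N) (v : Fin (q + 1) → N) :
    actionMap q d v = ∑ i : Fin (q + 1), (d ^ (i : ℕ)) (v i) := by
  simp [actionMap]

theorem actionMap_shiftEnd {q : ℕ} {d : Module.End R N} (hd : d ^ (q + 1) = 0)
    (v : Fin (q + 1) → N) : actionMap q d (shiftEnd R N q v) = d (actionMap q d v) := by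
  have e : ∀ i y, d ((d ^ i) y) = (d ^ (i + 1)) y := fun i y => by
    rw [pow_succ', Module.End.mul_apply]
  rw [actionMap_apply, actionMap_apply, Fin.sum_univ_succ, Fin.sum_univ_castSucc, map_add, map_sum]
  simp [e, hd]

theorem actionMap_single_zero (q : ℕ) (d : Module.End R N) (y : N) :
    actionMap q d (LinearMap.single R (fun _ : Fin (q + 1) => N) 0 y) = y := by
  rw [actionMap_apply, Fin.sum_univ_succ]
  simp

end FreeExtension

section Augmentation

variable {n : ℕ} {k : Type} [Field k] {X Y : Type*} [AddCommGroup X] [Module (PolyA n k) X]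
  [AddCommGroup Y] [Module (PolyA n k) Y]

/-- The submodule `(x_1, …, x_n) X`. -/
noncomputable def augSubmodule (n : ℕ) (k : Type) [Field k] (X : Type*) [AddCommGroup X]
    [Module (PolyA n k) X] : Submodule (PolyA n k) X :=
  Ideal.span (Set.range (MvPolynomial.X : Fin n → PolyA n k)) • ⊤

theorem X_smul_mem_augSubmodule (i : Fin n) (x : X) :
    (MvPolynomial.X i : PolyA n k) • x ∈ augSubmodule n k X :=
  Submodule.smul_mem_smul (Ideal.subset_span ⟨i, rfl⟩) trivial

theorem exists_sum_of_mem_augSubmodule {x : X} (hx : x ∈ augSubmodule n k X) :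
    ∃ y : Fin n → X, x = ∑ i, (MvPolynomial.X i : PolyA n k) • y i := by
  classical
  refine Submodule.smul_induction_on hx (fun a ha z _ => ?_) ?_
  · refine Submodule.span_induction ?_ ?_ ?_ ?_ ha
    · rintro _ ⟨i, rfl⟩
      refine ⟨Pi.single i z, ?_⟩
      rw [Finset.sum_eq_single i] <;> simp +contextual
    · exact ⟨0, by simp⟩
    · rintro a b - - ⟨y, hy⟩ ⟨w, hw⟩
      exact ⟨y + w, by simp [add_smul, hy, hw, Finset.sum_add_distrib]⟩
    · rintro a b - ⟨y, hy⟩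
      exact ⟨a • y, by simp [mul_smul, hy, Finset.smul_sum, smul_comm a]⟩
  · rintro x z ⟨y, rfl⟩ ⟨w, rfl⟩
    exact ⟨y + w, by simp [Finset.sum_add_distrib]⟩

theorem map_mem_augSubmodule (f : X →ₗ[PolyA n k] Y) {x : X} (hx : x ∈ augSubmodule n k X) :
    f x ∈ augSubmodule n k Y := by
  obtain ⟨y, rfl⟩ := exists_sum_of_mem_augSubmodule hx
  rw [map_sum]
  exact sum_mem fun i _ => by rw [map_smul]; exact X_smul_mem_augSubmodule _ _

variable [Module k X] [IsScalarTower k (PolyA n k) X] [Module k Y] [IsScalarTower k (PolyA n k) Y]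

/-- A `k`-linear map commuting with the variables is linear over the polynomial ring. -/
def polyLinearMapOfComm (f : X →ₗ[k] Y)
    (hf : ∀ (i : Fin n) x,
      f ((MvPolynomial.X i : PolyA n k) • x) = (MvPolynomial.X i : PolyA n k) • f x) :
    X →ₗ[PolyA n k] Y where
  toFun := f
  map_add' := f.map_add
  map_smul' a x := by
    induction a using MvPolynomial.induction_on generalizing x with
    | C c =>
      simp only [RingHom.id_apply]
      rw [← MvPolynomial.algebraMap_eq, algebraMap_smul, algebraMap_smul, map_smul]
    | add a b ha hb => simp [add_smul, ha, hb] at *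
    | mul_X a i ha =>
      simp only [RingHom.id_apply] at *
      rw [mul_smul, ha, hf, mul_smul]

/-- If modulo `(x_1, …, x_n)` the range of `t` contains the kernel of `d`, then `t` has modulo
`(x_1, …, x_n)` a section over this kernel, which lifts to an endomorphism of a projective module. -/
theorem exists_lift_section [Module.Projective (PolyA n k) X] (d t : Module.End (PolyA n k) X)
    (hac : ∀ x, d x ∈ augSubmodule n k X → ∃ y, x - t y ∈ augSubmodule n k X) :
    ∃ h : Module.End (PolyA n k) X, ∀ x, d x ∈ augSubmodule n k X →
      x - t (h x) ∈ augSubmodule n k X := by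
  let I := augSubmodule n k X
  let Q := X ⧸ I
  let dQ : Q →ₗ[PolyA n k] Q := I.mapQ I d fun x hx => map_mem_augSubmodule d hx
  let tQ : Q →ₗ[PolyA n k] Q := I.mapQ I t fun x hx => map_mem_augSubmodule t hx
  let T : Q →ₗ[k] Q := tQ.restrictScalars k
  obtain ⟨σ, hσ⟩ := T.rangeRestrict.exists_rightInverse_of_surjective T.range_rangeRestrict
  obtain ⟨u, hu⟩ := LinearMap.exists_extend σ
  have hTu : ∀ z, dQ z = 0 → tQ (u z) = z := by
    intro z hz
    obtain ⟨x, rfl⟩ := I.mkQ_surjective z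
    obtain ⟨y, hy⟩ := hac x ((Submodule.Quotient.mk_eq_zero I).1 hz)
    have hmem : I.mkQ x ∈ LinearMap.range T := by
      refine ⟨I.mkQ y, ?_⟩
      have := (Submodule.Quotient.eq I).2 hy
      exact this.symm
    have h1 := LinearMap.congr_fun hu ⟨_, hmem⟩
    have h2 := congrArg Subtype.val (LinearMap.congr_fun hσ ⟨_, hmem⟩)
    simp only [LinearMap.comp_apply, Submodule.subtype_apply] at h1
    rw [h1]
    exact h2
  have hX0 : ∀ (i : Fin n) (z : Q), (MvPolynomial.X i : PolyA n k) • z = 0 := by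
    intro i z
    obtain ⟨x, rfl⟩ := I.mkQ_surjective z
    exact (Submodule.Quotient.mk_eq_zero I).2 (X_smul_mem_augSubmodule i x)
  let uA : Q →ₗ[PolyA n k] Q := polyLinearMapOfComm u fun i x => by
    rw [hX0, hX0, map_zero]
  obtain ⟨h, hh⟩ := Module.projective_lifting_property I.mkQ (uA ∘ₗ I.mkQ) I.mkQ_surjective
  refine ⟨h, fun x hx => ?_⟩
  have h1 : I.mkQ (h x) = u (I.mkQ x) := LinearMap.congr_fun hh x
  have h2 := hTu (I.mkQ x) ((Submodule.Quotient.mk_eq_zero I).2 hx)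
  rw [← h1] at h2
  exact (Submodule.Quotient.eq I).1 h2.symm

end Augmentation

/-- A grading of a module over `k[x_1, …, x_n]`, `deg x_i = -1`, vanishing in large degrees and
given by the family of projections onto the homogeneous components. -/
structure BddGrading (n : ℕ) (k : Type) [Field k] (X : Type*) [AddCommGroup X]
    [Module (PolyA n k) X] [Module k X] where
  proj : ℤ → X →ₗ[k] X
  proj_self : ∀ m x, proj m (proj m x) = proj m x
  proj_ne : ∀ i j x, i ≠ j → proj i (proj j x) = 0
  exists_sum : ∀ x, ∃ s : Finset ℤ, ∑ m ∈ s, proj m x = x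
  proj_X : ∀ (i : Fin n) m x, proj m ((MvPolynomial.X i : PolyA n k) • x) =
    (MvPolynomial.X i : PolyA n k) • proj (m + 1) x
  bdd : ∃ b : ℤ, ∀ m, b ≤ m → ∀ x, proj m x = 0

namespace BddGrading

variable {n : ℕ} {k : Type} [Field k] {X Y Z : Type*} [AddCommGroup X] [Module (PolyA n k) X]
  [Module k X] [AddCommGroup Y] [Module (PolyA n k) Y] [Module k Y] [AddCommGroup Z]
  [Module (PolyA n k) Z] [Module k Z]

/-- `f` is homogeneous of degree `e`. -/
def IsHomog (G : BddGrading n k X) (H : BddGrading n k Y) (e : ℤ) (f : X →ₗ[PolyA n k] Y) : Prop :=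
  ∀ m x, f (G.proj m x) = H.proj (m + e) (f x)

theorem IsHomog.comp {G : BddGrading n k X} {H : BddGrading n k Y} {K : BddGrading n k Z}
    {e e' e'' : ℤ} {f : X →ₗ[PolyA n k] Y} {g : Y →ₗ[PolyA n k] Z} (hg : IsHomog H K e' g)
    (hf : IsHomog G H e f) (he : e + e' = e'') : IsHomog G K e'' (g ∘ₗ f) := by
  intro m x
  rw [LinearMap.comp_apply, hf, hg, LinearMap.comp_apply, ← he, add_assoc]

theorem IsHomog.sub {G : BddGrading n k X} {H : BddGrading n k Y} {e : ℤ}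
    {f g : X →ₗ[PolyA n k] Y} (hf : IsHomog G H e f) (hg : IsHomog G H e g) :
    IsHomog G H e (f - g) := by
  intro m x
  simp [hf m x, hg m x]

theorem IsHomog.sum {G : BddGrading n k X} {H : BddGrading n k Y} {e : ℤ} {ι : Type*}
    (s : Finset ι) {f : ι → X →ₗ[PolyA n k] Y} (hf : ∀ i ∈ s, IsHomog G H e (f i)) :
    IsHomog G H e (∑ i ∈ s, f i) := by
  intro m x
  simp only [LinearMap.sum_apply, map_sum]
  exact Finset.sum_congr rfl fun i hi => hf i hi m x

theorem IsHomog.id (G : BddGrading n k X) : IsHomog G G 0 LinearMap.id := by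
  intro m x
  simp

theorem IsHomog.pow {G : BddGrading n k X} {e : ℤ} {f : Module.End (PolyA n k) X}
    (hf : IsHomog G G e f) (j : ℕ) : IsHomog G G (j * e) (f ^ j) := by
  induction j with
  | zero =>
    rw [Nat.cast_zero, zero_mul]
    exact IsHomog.id G
  | succ j ih =>
    rw [pow_succ]
    exact IsHomog.comp ih hf (by push_cast; ring)

theorem IsHomog.nullHomotopicMap {G : BddGrading n k X} {H : BddGrading n k Y} {q : ℕ}
    {dX : Module.End (PolyA n k) X} {dY : Module.End (PolyA n k) Y} (hX : IsHomog G G (-1) dX)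
    (hY : IsHomog H H (-1) dY) {h : X →ₗ[PolyA n k] Y} (hh : IsHomog G H q h) :
    IsHomog G H 0 (nullHomotopicMap q dX dY h) := by
  refine IsHomog.sum _ fun i hi => ?_
  rw [Finset.mem_range] at hi
  refine (hY.pow (q - i)).comp (hh.comp (hX.pow i) rfl) ?_
  rw [Nat.cast_sub (by omega)]
  ring

theorem proj_eq_zero_of_notMem (G : BddGrading n k X) {x : X} {s : Finset ℤ}
    (hs : ∑ m ∈ s, G.proj m x = x) {m : ℤ} (hm : m ∉ s) : G.proj m x = 0 := by
  rw [← hs, map_sum]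
  refine Finset.sum_eq_zero fun j hj => G.proj_ne _ _ _ ?_
  rintro rfl
  exact hm hj

theorem finite_support (G : BddGrading n k X) (x : X) :
    (Function.support fun m => G.proj m x).Finite := by
  obtain ⟨s, hs⟩ := G.exists_sum x
  refine s.finite_toSet.subset fun m hm => ?_
  by_contra hms
  exact hm (G.proj_eq_zero_of_notMem hs hms)

theorem finsum_proj (G : BddGrading n k X) (x : X) : ∑ᶠ m, G.proj m x = x := by
  obtain ⟨s, hs⟩ := G.exists_sum x
  rw [finsum_eq_sum_of_support_subset (s := s), hs]
  intro m hm
  by_contra hms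
  exact hm (G.proj_eq_zero_of_notMem hs hms)

theorem mem_of_forall_proj_mem (G : BddGrading n k X) {S : AddSubmonoid X} {x : X}
    (h : ∀ m, G.proj m x ∈ S) : x ∈ S := by
  obtain ⟨s, hs⟩ := G.exists_sum x
  rw [← hs]
  exact sum_mem fun m _ => h m

theorem isHomog_of_proj_map_proj {G : BddGrading n k X} {H : BddGrading n k Y} {e : ℤ}
    {f : X →ₗ[PolyA n k] Y} (h : ∀ m x, H.proj (m + e) (f (G.proj m x)) = f (G.proj m x)) :
    IsHomog G H e f := by
  intro m x
  obtain ⟨s, hs⟩ := G.exists_sum x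
  conv_rhs => rw [← hs, map_sum, map_sum]
  have hne : ∀ j, j ≠ m → H.proj (m + e) (f (G.proj j x)) = 0 := fun j hj => by
    rw [← h j, H.proj_ne _ _ _ (by omega)]
  by_cases hm : m ∈ s
  · rw [Finset.sum_eq_single_of_mem m hm fun j _ hj => hne j hj, h]
  · rw [G.proj_eq_zero_of_notMem hs hm, map_zero, Finset.sum_eq_zero]
    rintro j hj
    exact hne j fun h' => hm (h' ▸ hj)

/-- The degree `e` component of a linear map. -/
theorem exists_component [IsScalarTower k (PolyA n k) X] [IsScalarTower k (PolyA n k) Y]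
    (G : BddGrading n k X) (H : BddGrading n k Y) (e : ℤ)
    (f : X →ₗ[PolyA n k] Y) :
    ∃ g : X →ₗ[PolyA n k] Y, IsHomog G H e g ∧
      ∀ m x, g (G.proj m x) = H.proj (m + e) (f (G.proj m x)) := by
  have hfin : ∀ x, (Function.support fun m => H.proj (m + e) (f (G.proj m x))).Finite := by
    refine fun x => (G.finite_support x).subset fun m hm hm' => hm ?_
    simp only at hm'
    simp [hm']
  let gk : X →ₗ[k] Y :=
    { toFun := fun x => ∑ᶠ m, H.proj (m + e) (f (G.proj m x))
      map_add' := fun x y => by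
        rw [← finsum_add_distrib (hfin x) (hfin y)]
        simp
      map_smul' := fun c x => by
        rw [RingHom.id_apply, smul_finsum' c (hfin x)]
        refine finsum_congr fun m => ?_
        rw [map_smul, LinearMap.map_smul_of_tower, map_smul] }
  let g : X →ₗ[PolyA n k] Y := polyLinearMapOfComm gk fun i x => by
    change ∑ᶠ m, _ = _ • ∑ᶠ m, _
    rw [smul_finsum' _ (hfin x)]
    refine Eq.trans (finsum_congr fun m => ?_) (finsum_comp_equiv (Equiv.addRight (1 : ℤ)))
    rw [G.proj_X, map_smul, H.proj_X, Equiv.coe_addRight, add_right_comm]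
  have hg : ∀ m x, g (G.proj m x) = H.proj (m + e) (f (G.proj m x)) := by
    intro m x
    change ∑ᶠ j, _ = _
    rw [finsum_eq_single _ m, G.proj_self]
    intro j hj
    rw [G.proj_ne _ _ _ hj, map_zero, map_zero]
  exact ⟨g, isHomog_of_proj_map_proj fun m x => by rw [hg, H.proj_self], hg⟩

/-- A homogeneous endomorphism of degree zero that is nilpotent modulo `(x_1, …, x_n)` is locally
nilpotent. -/
theorem exists_pow_eq_zero (G : BddGrading n k X) {ν : Module.End (PolyA n k) X}
    (hν : IsHomog G G 0 ν) {p : ℕ} (hp : ∀ x, (ν ^ p) x ∈ augSubmodule n k X) (x : X) :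
    ∃ j, (ν ^ j) x = 0 := by
  obtain ⟨b, hb⟩ := G.bdd
  have key : ∀ (j : ℕ) (m : ℤ), b - j ≤ m → ∀ x, (ν ^ (p * j)) (G.proj m x) = 0 := by
    intro j
    induction j with
    | zero =>
      intro m hm x
      rw [hb m (by simpa using hm), map_zero]
    | succ j ih =>
      intro m hm x
      obtain ⟨y, hy⟩ := exists_sum_of_mem_augSubmodule (hp x)
      have h1 : (ν ^ p) (G.proj m x) = G.proj m ((ν ^ p) x) := by
        simpa using hν.pow p m x
      rw [mul_add, mul_one, pow_add, Module.End.mul_apply, h1, hy, map_sum, map_sum]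
      refine Finset.sum_eq_zero fun i _ => ?_
      rw [G.proj_X, map_smul, ih (m + 1) (by push_cast at hm; omega), smul_zero]
  let S : AddSubmonoid X :=
    { carrier := {x | ∃ j, (ν ^ j) x = 0}
      zero_mem' := ⟨0, map_zero _⟩
      add_mem' := by
        rintro x y ⟨i, hi⟩ ⟨j, hj⟩
        refine ⟨i + j, ?_⟩
        rw [map_add, pow_add, Module.End.mul_apply, Module.End.mul_apply, hj, map_zero, add_zero,
          ← Module.End.mul_apply, ← pow_add, add_comm, pow_add, Module.End.mul_apply, hi,
          map_zero] }
  refine G.mem_of_forall_proj_mem (S := S) fun m => ?_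
  exact ⟨_, key (b - m).toNat m (by omega) x⟩

/-- If `ν` is locally nilpotent then `1 - ν` is bijective. -/
theorem bijective_one_sub {R X : Type*} [CommRing R] [AddCommGroup X] [Module R X]
    {ν : Module.End R X} (h : ∀ x, ∃ j, (ν ^ j) x = 0) :
    Function.Bijective ((1 : Module.End R X) - ν) := by
  constructor
  · refine (injective_iff_map_eq_zero _).2 fun x hx => ?_
    have hx' : ν x = x := (sub_eq_zero.1 hx).symm
    obtain ⟨j, hj⟩ := h x
    rw [← hj]
    clear hj
    induction j with
    | zero => simp
    | succ j ih => rw [pow_succ, Module.End.mul_apply, hx', ← ih]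
  · intro x
    obtain ⟨j, hj⟩ := h x
    refine ⟨(∑ i ∈ Finset.range j, ν ^ i) x, ?_⟩
    rw [← Module.End.mul_apply, mul_neg_geom_sum, LinearMap.sub_apply, hj]
    simp

/-- A bounded above projective module with a nilpotent differential that is acyclic modulo
`(x_1, …, x_n)` is contractible. -/
theorem exists_contraction [IsScalarTower k (PolyA n k) X] [Module.Projective (PolyA n k) X]
    (G : BddGrading n k X)
    {q : ℕ} {d : Module.End (PolyA n k) X} (hd : IsHomog G G (-1) d) (hdq : d ^ (q + 1) = 0)
    (hac : ∀ x, d x ∈ augSubmodule n k X → ∃ y, x - (d ^ q) y ∈ augSubmodule n k X) :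
    ∃ h : Module.End (PolyA n k) X, IsHomog G G q h ∧
      _root_.nullHomotopicMap q d d h = LinearMap.id := by
  obtain ⟨h', hh'⟩ := exists_lift_section d (d ^ q) hac
  obtain ⟨h, hh, hproj⟩ := G.exists_component G q h'
  have proj_mem : ∀ m x, x ∈ augSubmodule n k X → G.proj m x ∈ augSubmodule n k X := by
    intro m x hx
    obtain ⟨y, rfl⟩ := exists_sum_of_mem_augSubmodule hx
    rw [map_sum]
    exact sum_mem fun i _ => by rw [G.proj_X]; exact X_smul_mem_augSubmodule _ _
  have hsec : ∀ x, d x ∈ augSubmodule n k X → x - (d ^ q) (h x) ∈ augSubmodule n k X := by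
    intro x hx
    refine G.mem_of_forall_proj_mem (S := (augSubmodule n k X).toAddSubmonoid) fun m => ?_
    have hm : d (G.proj m x) ∈ augSubmodule n k X := by
      rw [hd]
      exact proj_mem _ _ hx
    have h1 := proj_mem m _ (hh' _ hm)
    have h2 : G.proj m ((d ^ q) (h x)) = G.proj m ((d ^ q) (h' (G.proj m x))) := by
      have e1 := hd.pow q (m + q) (h x)
      have e2 := hd.pow q (m + q) (h' (G.proj m x))
      have e3 : m + (q : ℤ) + q * (-1) = m := by ring
      rw [e3] at e1 e2
      rw [← e1, ← e2, ← hproj, hh]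
    rw [map_sub, G.proj_self] at h1
    rw [map_sub, h2]
    exact h1
  let θ : Module.End (PolyA n k) X := _root_.nullHomotopicMap q d d h
  have hθ : IsHomog G G 0 θ := IsHomog.nullHomotopicMap hd hd hh
  have hθd : ∀ x, θ (d x) = d (θ x) := nullHomotopicMap_comm hdq hdq h
  let ν : Module.End (PolyA n k) X := 1 - θ
  have hν : IsHomog G G 0 ν := (IsHomog.id G).sub hθ
  have hνd : ∀ x, ν (d x) = d (ν x) := fun x => by simp [ν, hθd]
  have base : ∀ x, d x ∈ augSubmodule n k X → ν x ∈ augSubmodule n k X := by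
    intro x hx
    have h1 : ν x = (x - (d ^ q) (h x)) -
        ∑ i ∈ Finset.range q, (d ^ (q - (i + 1))) (h ((d ^ (i + 1)) x)) := by
      change x - _root_.nullHomotopicMap q d d h x = _
      rw [nullHomotopicMap_apply, Finset.sum_range_succ']
      simp only [Nat.sub_zero, pow_zero, Module.End.one_apply]
      abel
    rw [h1]
    refine sub_mem (hsec x hx) (sum_mem fun i _ => ?_)
    rw [pow_succ, Module.End.mul_apply]
    exact map_mem_augSubmodule _ (map_mem_augSubmodule _ (map_mem_augSubmodule _ hx))
  have step : ∀ (s : ℕ) x, (d ^ s) x ∈ augSubmodule n k X → (ν ^ s) x ∈ augSubmodule n k X := by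
    intro s
    induction s with
    | zero => simp
    | succ s ih =>
      intro x hx
      rw [pow_succ, Module.End.mul_apply]
      refine ih _ ?_
      rw [← pow_comm_apply hνd]
      refine base _ ?_
      rwa [← Module.End.mul_apply, ← pow_succ']
  have hnil := G.exists_pow_eq_zero hν (p := q + 1) fun x => step _ x (by simp [hdq])
  have hbij : Function.Bijective θ := by
    have := bijective_one_sub hnil
    rwa [sub_sub_cancel] at this
  let e := LinearEquiv.ofBijective θ hbij
  have he : ∀ x, θ (e.symm x) = x := e.apply_symm_apply
  have hed : ∀ x, e.symm.toLinearMap (d x) = d (e.symm.toLinearMap x) := fun x =>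
    hbij.1 (by simp [hθd, he])
  have hehom : IsHomog G G 0 e.symm.toLinearMap := fun m x => hbij.1 (by
    rw [LinearEquiv.coe_coe, he, hθ, he, add_zero, add_zero])
  refine ⟨h ∘ₗ e.symm.toLinearMap, hh.comp hehom (by simp), ?_⟩
  rw [← nullHomotopicMap_comp hed]
  exact LinearMap.ext he

theorem IsHomog.neg {G : BddGrading n k X} {H : BddGrading n k Y} {e : ℤ}
    {f : X →ₗ[PolyA n k] Y} (hf : IsHomog G H e f) : IsHomog G H e (-f) := by
  intro m x
  simp [hf m x]

/-- The grading of a product. -/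
def prod (G : BddGrading n k X) (H : BddGrading n k Y) : BddGrading n k (X × Y) where
  proj m := (G.proj m).prodMap (H.proj m)
  proj_self m x := by simp [G.proj_self, H.proj_self]
  proj_ne i j x hij := by simp [G.proj_ne _ _ _ hij, H.proj_ne _ _ _ hij]
  exists_sum x := by
    classical
    refine ⟨(G.finite_support x.1).toFinset ∪ (H.finite_support x.2).toFinset, ?_⟩
    ext
    · rw [Prod.fst_sum]
      conv_rhs => rw [← G.finsum_proj x.1]
      rw [finsum_eq_sum_of_support_subset]
      · rfl
      · intro m hm
        simpa using Or.inl hm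
    · rw [Prod.snd_sum]
      conv_rhs => rw [← H.finsum_proj x.2]
      rw [finsum_eq_sum_of_support_subset]
      · rfl
      · intro m hm
        simpa using Or.inr hm
  proj_X i m x := by simp [G.proj_X, H.proj_X]
  bdd := by
    obtain ⟨b, hb⟩ := G.bdd
    obtain ⟨c, hc⟩ := H.bdd
    refine ⟨max b c, fun m hm x => ?_⟩
    simp [hb m (le_of_max_le_left hm), hc m (le_of_max_le_right hm)]

/-- The grading of `X ^ (q + 1)` in which the `i`-th factor is shifted by `i`. -/
def shifted (G : BddGrading n k X) (q : ℕ) : BddGrading n k (Fin (q + 1) → X) where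
  proj m := LinearMap.pi fun i => G.proj (m + i) ∘ₗ LinearMap.proj i
  proj_self m x := by
    ext i
    simp [G.proj_self]
  proj_ne i j x hij := by
    ext l
    simp [G.proj_ne (i + (l : ℤ)) (j + l) _ (by omega)]
  exists_sum v := by
    have hfin : ∀ i : Fin (q + 1),
        (Function.support fun m : ℤ => G.proj (m + (i : ℕ)) (v i)).Finite := fun i =>
      Set.Finite.preimage (f := fun m : ℤ => m + (i : ℕ)) (add_left_injective _).injOn
        (G.finite_support (v i))
    refine ⟨(Set.finite_iUnion hfin).toFinset, ?_⟩
    ext i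
    rw [Finset.sum_apply]
    conv_rhs => rw [← G.finsum_proj (v i), ← finsum_comp_equiv (Equiv.addRight ((i : ℕ) : ℤ))]
    rw [finsum_eq_sum_of_support_subset]
    · rfl
    · intro m hm
      rw [Set.Finite.coe_toFinset]
      exact Set.mem_iUnion.2 ⟨i, hm⟩
  proj_X i m x := by
    ext l
    simp [G.proj_X, add_right_comm]
  bdd := by
    obtain ⟨b, hb⟩ := G.bdd
    refine ⟨b, fun m hm x => ?_⟩
    ext l
    simp [hb (m + (l : ℤ)) (by omega)]

/-- The grading of the kernel of a homogeneous map. -/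
def ker [IsScalarTower k (PolyA n k) X] (G : BddGrading n k X) {H : BddGrading n k Y}
    {f : X →ₗ[PolyA n k] Y} (hf : IsHomog G H 0 f) : BddGrading n k (LinearMap.ker f) where
  proj m :=
    { toFun := fun x => ⟨G.proj m x, by rw [LinearMap.mem_ker, hf, x.2, map_zero]⟩
      map_add' := fun x y => by ext; simp
      map_smul' := fun c x => by ext; simp }
  proj_self m x := by
    ext
    simp [G.proj_self]
  proj_ne i j x hij := by
    ext
    simp [G.proj_ne _ _ _ hij]
  exists_sum x := by
    obtain ⟨s, hs⟩ := G.exists_sum (x : X)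
    refine ⟨s, ?_⟩
    ext
    simpa using hs
  proj_X i m x := by
    ext
    simp [G.proj_X]
  bdd := by
    obtain ⟨b, hb⟩ := G.bdd
    refine ⟨b, fun m hm x => ?_⟩
    ext
    simp [hb m hm]

theorem isHomog_fst (G : BddGrading n k X) (H : BddGrading n k Y) :
    IsHomog (G.prod H) G 0 (LinearMap.fst (PolyA n k) X Y) := fun m x => by simp [prod]

theorem isHomog_snd (G : BddGrading n k X) (H : BddGrading n k Y) :
    IsHomog (G.prod H) H 0 (LinearMap.snd (PolyA n k) X Y) := fun m x => by simp [prod]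

theorem isHomog_inl (G : BddGrading n k X) (H : BddGrading n k Y) :
    IsHomog G (G.prod H) 0 (LinearMap.inl (PolyA n k) X Y) := fun m x => by simp [prod]

theorem isHomog_inr (G : BddGrading n k X) (H : BddGrading n k Y) :
    IsHomog H (G.prod H) 0 (LinearMap.inr (PolyA n k) X Y) := fun m x => by simp [prod]

theorem isHomog_shiftEnd (G : BddGrading n k X) (q : ℕ) :
    IsHomog (G.shifted q) (G.shifted q) (-1) (shiftEnd (PolyA n k) X q) := by
  intro m v
  ext i
  refine Fin.cases ?_ (fun j => ?_) i
  · simp [shifted]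
  · simp only [shifted, shiftEnd_succ, LinearMap.pi_apply, LinearMap.comp_apply, LinearMap.proj_apply]
    congr 2
    simp only [Fin.val_castSucc, Fin.val_succ]
    push_cast
    ring

theorem isHomog_single_zero (G : BddGrading n k X) (q : ℕ) :
    IsHomog G (G.shifted q) 0 (LinearMap.single (PolyA n k) (fun _ : Fin (q + 1) => X) 0) := by
  intro m x
  ext i
  refine Fin.cases ?_ (fun j => ?_) i <;> simp [shifted]

theorem isHomog_shiftContraction (G : BddGrading n k X) (q : ℕ) :
    IsHomog (G.shifted q) (G.shifted q) q (shiftContraction (PolyA n k) X q) := by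
  refine (G.isHomog_single_zero q).comp (e := q) (fun m x => ?_) (add_zero _)
  simp [shifted]

theorem isHomog_actionMap (G : BddGrading n k X) (q : ℕ) {d : Module.End (PolyA n k) X}
    (hd : IsHomog G G (-1) d) : IsHomog (G.shifted q) G 0 (actionMap q d) := by
  intro m v
  rw [actionMap_apply, actionMap_apply, map_sum]
  refine Finset.sum_congr rfl fun i _ => ?_
  refine (hd.pow i (m + i) (v i)).trans ?_
  congr 2
  ring

/-- A homogeneous surjection with a homogeneous linear section splits compatibly with the
differentials as soon as its kernel is contractible. -/
theorem exists_section_of_contraction [IsScalarTower k (PolyA n k) X]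
    {G : BddGrading n k X} {H : BddGrading n k Y} {q : ℕ} {dX : Module.End (PolyA n k) X}
    {dY : Module.End (PolyA n k) Y} (hdX : IsHomog G G (-1) dX) (hdXq : dX ^ (q + 1) = 0)
    {F : X →ₗ[PolyA n k] Y} (hF : IsHomog G H 0 F) (hFd : ∀ x, F (dX x) = dY (F x))
    {S : Y →ₗ[PolyA n k] X} (hS : IsHomog H G 0 S) (hFS : ∀ y, F (S y) = y)
    {dK : Module.End (PolyA n k) (LinearMap.ker F)} (hdK : ∀ x, (dK x : X) = dX x)
    {h : Module.End (PolyA n k) (LinearMap.ker F)} (hh : IsHomog (G.ker hF) (G.ker hF) q h)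
    (hK : _root_.nullHomotopicMap q dK dK h = LinearMap.id) :
    ∃ (σ : Y →ₗ[PolyA n k] X) (r : X →ₗ[PolyA n k] LinearMap.ker F), IsHomog H G 0 σ ∧
      IsHomog G (G.ker hF) q r ∧ (∀ y, F (σ y) = y) ∧ (∀ y, σ (dY y) = dX (σ y)) ∧
      ∀ x, σ (F x) = x - _root_.nullHomotopicMap q dX dK r x := by
  let r₀ : X →ₗ[PolyA n k] LinearMap.ker F :=
    LinearMap.codRestrict _ (LinearMap.id - S ∘ₗ F) fun x => by simp [hFS]
  have hr₀ : IsHomog G (G.ker hF) 0 r₀ := fun m x => by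
    ext
    exact (IsHomog.id G).sub (hS.comp hF (zero_add 0)) m x
  have hι : IsHomog (G.ker hF) G 0 (LinearMap.ker F).subtype := fun m x => by
    rw [add_zero]
    rfl
  have hdKh : IsHomog (G.ker hF) (G.ker hF) (-1) dK := fun m x => by
    ext
    rw [hdK]
    refine (hdX m x).trans ?_
    rw [← hdK]
    rfl
  have hdKq : dK ^ (q + 1) = 0 := by
    refine LinearMap.ext fun x => Subtype.ext ?_
    have := pow_comm_apply (f := (LinearMap.ker F).subtype) hdK (q + 1) x
    simpa [hdXq] using this
  let ρ : X →ₗ[PolyA n k] LinearMap.ker F := _root_.nullHomotopicMap q dX dK (h ∘ₗ r₀)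
  have hρι : ∀ x : LinearMap.ker F, ρ x = x := by
    have h1 : r₀ ∘ₗ (LinearMap.ker F).subtype = LinearMap.id := by
      refine LinearMap.ext fun x => Subtype.ext ?_
      have hx : F x = 0 := x.2
      simp [r₀, hx]
    intro x
    have h2 := nullHomotopicMap_comp (q := q) (dZ := dK) (f := (LinearMap.ker F).subtype) hdK
      (h ∘ₗ r₀)
    rw [LinearMap.comp_assoc, h1, LinearMap.comp_id, hK] at h2
    exact LinearMap.congr_fun h2 x
  have hρd : ∀ x, ρ (dX x) = dK (ρ x) := nullHomotopicMap_comm hdXq hdKq _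
  have hρ : IsHomog G (G.ker hF) 0 ρ :=
    IsHomog.nullHomotopicMap hdX hdKh (hh.comp hr₀ (zero_add _))
  let σ : Y →ₗ[PolyA n k] X := S - (LinearMap.ker F).subtype ∘ₗ ρ ∘ₗ S
  have hσF : ∀ x, σ (F x) = x - ρ x := by
    intro x
    have h1 : ρ (x - S (F x)) = x - S (F x) := by
      have := congrArg Subtype.val (hρι ⟨x - S (F x), by simp [hFS]⟩)
      exact this
    rw [map_sub] at h1
    simp only [σ, LinearMap.sub_apply, LinearMap.comp_apply, Submodule.subtype_apply]
    rw [AddSubgroupClass.coe_sub, sub_eq_iff_eq_add] at h1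
    rw [h1]
    abel
  refine ⟨σ, h ∘ₗ r₀, hS.sub (hι.comp (hρ.comp hS rfl) rfl), hh.comp hr₀ (zero_add _),
    fun y => ?_, fun y => ?_, hσF⟩
  · have h1 : F (ρ (S y)) = 0 := (ρ (S y)).2
    simp [σ, hFS, h1]
  · rw [← hFS y, ← hFd, hσF, hσF, hρd, map_sub, hdK]

/-- A map of bounded above projective modules with nilpotent differentials that induces
isomorphisms on homology modulo `(x_1, …, x_n)` is a homotopy equivalence. -/
theorem exists_homotopyInverse [IsScalarTower k (PolyA n k) X] [IsScalarTower k (PolyA n k) Y]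
    [Module.Projective (PolyA n k) X] [Module.Projective (PolyA n k) Y]
    {G : BddGrading n k X} {H : BddGrading n k Y} {q : ℕ} {dX : Module.End (PolyA n k) X}
    {dY : Module.End (PolyA n k) Y} (hdX : IsHomog G G (-1) dX) (hdXq : dX ^ (q + 1) = 0)
    (hdY : IsHomog H H (-1) dY) (hdYq : dY ^ (q + 1) = 0)
    {f : X →ₗ[PolyA n k] Y} (hf : IsHomog G H 0 f) (hfd : ∀ x, f (dX x) = dY (f x))
    (hinj : ∀ x, dX x ∈ augSubmodule n k X → (∃ y, f x - (dY ^ q) y ∈ augSubmodule n k Y) →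
      ∃ z, x - (dX ^ q) z ∈ augSubmodule n k X)
    (hsurj : ∀ y, (dY ^ q) y ∈ augSubmodule n k Y →
      ∃ x, (dX ^ q) x ∈ augSubmodule n k X ∧ ∃ z, y - f x - dY z ∈ augSubmodule n k Y) :
    ∃ g : Y →ₗ[PolyA n k] X, IsHomog H G 0 g ∧ (∀ y, g (dY y) = dX (g y)) ∧
      ∃ (h₁ : Module.End (PolyA n k) X) (h₂ : Module.End (PolyA n k) Y),
        IsHomog G G q h₁ ∧ IsHomog H H q h₂ ∧
        g ∘ₗ f - LinearMap.id = _root_.nullHomotopicMap q dX dX h₁ ∧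
        f ∘ₗ g - LinearMap.id = _root_.nullHomotopicMap q dY dY h₂ := by
  let P := Fin (q + 1) → Y
  let dP : Module.End (PolyA n k) P := shiftEnd (PolyA n k) Y q
  let c : Module.End (PolyA n k) P := shiftContraction (PolyA n k) Y q
  let ϖ : P →ₗ[PolyA n k] Y := actionMap q dY
  have hϖd : ∀ v, ϖ (dP v) = dY (ϖ v) := actionMap_shiftEnd hdYq
  have hc : _root_.nullHomotopicMap q dP dP c = LinearMap.id := nullHomotopicMap_shiftContraction q
  let E := X × P
  let dE : Module.End (PolyA n k) E := dX.prodMap dP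
  have hdE_pow : ∀ (i : ℕ) (e : E), (dE ^ i) e = ((dX ^ i) e.1, (dP ^ i) e.2) := fun i e =>
    Prod.ext (pow_comm_apply (f := LinearMap.fst (PolyA n k) X P) (dX := dE) (fun _ => rfl) i e)
      (pow_comm_apply (f := LinearMap.snd (PolyA n k) X P) (dX := dE) (fun _ => rfl) i e)
  have hdEq : dE ^ (q + 1) = 0 := LinearMap.ext fun e => by
    rw [hdE_pow, hdXq, show dP ^ (q + 1) = 0 from shiftEnd_pow_eq_zero q]
    rfl
  let GP : BddGrading n k P := H.shifted q
  let GE : BddGrading n k E := G.prod GP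
  have hdE : IsHomog GE GE (-1) dE := fun m e =>
    Prod.ext (hdX m e.1) (H.isHomog_shiftEnd q m e.2)
  let F : E →ₗ[PolyA n k] Y := f.coprod ϖ
  have hF_apply : ∀ e : E, F e = f e.1 + ϖ e.2 := fun e => rfl
  have hF : IsHomog GE H 0 F := fun m e => by
    rw [hF_apply, hF_apply, map_add, ← hf, ← H.isHomog_actionMap q hdY]
    rfl
  have hFd : ∀ e, F (dE e) = dY (F e) := fun e => by
    rw [hF_apply, hF_apply, map_add, ← hfd, ← hϖd]
    rfl
  let S : Y →ₗ[PolyA n k] E :=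
    LinearMap.inr (PolyA n k) X P ∘ₗ LinearMap.single (PolyA n k) (fun _ : Fin (q + 1) => Y) 0
  have hS : IsHomog H GE 0 S := (isHomog_inr G GP).comp (H.isHomog_single_zero q) rfl
  have hFS : ∀ y, F (S y) = y := fun y => by
    rw [hF_apply]
    refine (congrArg (· + _) (map_zero f)).trans ((zero_add _).trans ?_)
    exact actionMap_single_zero q dY y
  let dK : Module.End (PolyA n k) (LinearMap.ker F) := dE.restrict fun e he => by
    rw [LinearMap.mem_ker] at he ⊢
    rw [hFd, he, map_zero]
  have hdK : ∀ x, (dK x : E) = dE x := fun x => rfl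
  have hdK_pow : ∀ (i : ℕ) x, ((dK ^ i) x : E) = (dE ^ i) x := fun i x =>
    pow_comm_apply (dX := dK) (dY := dE) (f := (LinearMap.ker F).subtype) hdK i x
  let r : E →ₗ[PolyA n k] LinearMap.ker F :=
    LinearMap.codRestrict _ (LinearMap.id - S ∘ₗ F) fun x => by simp [hFS]
  have hr : ∀ x : LinearMap.ker F, r x = x := fun x => Subtype.ext (by
    have hx : F x = 0 := x.2
    simp [r, hx])
  have : Module.Projective (PolyA n k) P :=
    Module.Projective.of_equiv
      (DirectSum.linearEquivFunOnFintype (PolyA n k) (Fin (q + 1)) fun _ => Y)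
  have : Module.Projective (PolyA n k) E := inferInstanceAs (Module.Projective _ (X × P))
  have : Module.Projective (PolyA n k) (LinearMap.ker F) :=
    Module.Projective.of_split (LinearMap.ker F).subtype r (LinearMap.ext hr)
  have hdKh : IsHomog (GE.ker hF) (GE.ker hF) (-1) dK := fun m x => Subtype.ext (hdE m x)
  have hdKq : dK ^ (q + 1) = 0 := LinearMap.ext fun x => Subtype.ext (by
    rw [hdK_pow, hdEq]
    rfl)
  have hac : ∀ x, dK x ∈ augSubmodule n k (LinearMap.ker F) →
      ∃ y, x - (dK ^ q) y ∈ augSubmodule n k (LinearMap.ker F) := by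
    intro x hx
    have hFx : f (x : E).1 + ϖ (x : E).2 = 0 := x.2
    have hx1 : dX (x : E).1 ∈ augSubmodule n k X :=
      map_mem_augSubmodule (LinearMap.fst (PolyA n k) X P ∘ₗ (LinearMap.ker F).subtype) hx
    have hx2 : dP (x : E).2 ∈ augSubmodule n k P :=
      map_mem_augSubmodule (LinearMap.snd (PolyA n k) X P ∘ₗ (LinearMap.ker F).subtype) hx
    have hP : (x : E).2 - (dP ^ q) (c (x : E).2) ∈ augSubmodule n k P := by
      have h1 := LinearMap.congr_fun hc (x : E).2
      rw [nullHomotopicMap_apply, Finset.sum_range_succ'] at h1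
      simp only [Nat.sub_zero, pow_zero, Module.End.one_apply, LinearMap.id_apply] at h1
      rw [← eq_sub_iff_add_eq] at h1
      rw [← h1]
      refine sum_mem fun i _ => ?_
      rw [pow_succ dP i, Module.End.mul_apply]
      exact map_mem_augSubmodule _ (map_mem_augSubmodule _ (map_mem_augSubmodule _ hx2))
    obtain ⟨z, hz⟩ := hinj _ hx1 ⟨-ϖ (c (x : E).2), by
      have h1 := neg_mem (map_mem_augSubmodule ϖ hP)
      rw [map_sub, pow_comm_apply hϖd] at h1
      rw [eq_neg_of_add_eq_zero_left hFx, map_neg]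
      convert h1 using 1
      abel⟩
    let e : E := (z, c (x : E).2)
    have he : (x : E) - (dE ^ q) e ∈ augSubmodule n k E := by
      have h1 := add_mem (map_mem_augSubmodule (LinearMap.inl (PolyA n k) X P) hz)
        (map_mem_augSubmodule (LinearMap.inr (PolyA n k) X P) hP)
      rw [hdE_pow]
      convert h1 using 1
      exact Prod.ext (add_zero _).symm (zero_add _).symm
    obtain ⟨x', hx', w, hw⟩ := hsurj (F e) (by
      have h1 := neg_mem (map_mem_augSubmodule F he)
      have hx0 : F x = 0 := x.2
      rw [map_sub, hx0, pow_comm_apply hFd, zero_sub, neg_neg] at h1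
      exact h1)
    let i : E := S (F e - f x' - dY w)
    have hi : i ∈ augSubmodule n k E := map_mem_augSubmodule S hw
    let κ : E := e - (x', 0) - dE (S w) - i
    have hκ : F κ = 0 := by
      have h0 : F ((x', 0) : E) = f x' := by simp [hF_apply]
      simp only [κ, i, map_sub, hFd, hFS, h0]
      abel
    refine ⟨⟨κ, hκ⟩, ?_⟩
    have hmem : (x : E) - (dE ^ q) κ ∈ augSubmodule n k E := by
      have h1 : (dE ^ q) (dE (S w)) = 0 := by
        rw [← Module.End.mul_apply, ← pow_succ, hdEq]
        rfl
      have h2 : (dE ^ q) ((x', 0) : E) ∈ augSubmodule n k E := by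
        have := map_mem_augSubmodule (LinearMap.inl (PolyA n k) X P) hx'
        rw [hdE_pow]
        simpa using this
      have h3 := add_mem (add_mem he h2) (map_mem_augSubmodule (dE ^ q) hi)
      simp only [κ, map_sub, h1]
      convert h3 using 1
      abel
    have h4 := map_mem_augSubmodule r hmem
    have h5 : (x : E) - (dE ^ q) κ = ((x - (dK ^ q) ⟨κ, hκ⟩ : LinearMap.ker F) : E) := by
      rw [AddSubgroupClass.coe_sub, hdK_pow]
    rwa [h5, hr] at h4
  obtain ⟨h, hh, hK⟩ := (GE.ker hF).exists_contraction hdKh hdKq hac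
  obtain ⟨σ, t, hσ, ht, hFσ, hσd, hσF⟩ :=
    exists_section_of_contraction hdE hdEq hF hFd hS hFS hdK hh hK
  have hι : IsHomog (GE.ker hF) GE 0 (LinearMap.ker F).subtype := fun m x => by
    rw [add_zero]
    rfl
  let φ : LinearMap.ker F →ₗ[PolyA n k] X :=
    -(LinearMap.fst (PolyA n k) X P ∘ₗ (LinearMap.ker F).subtype)
  have hφ : IsHomog (GE.ker hF) G 0 φ := ((isHomog_fst G GP).comp hι rfl).neg
  have hφd : ∀ x, φ (dK x) = dX (φ x) := fun x => (map_neg dX _).symm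
  have hinl : ∀ x, LinearMap.inl (PolyA n k) X P (dX x) = dE (LinearMap.inl (PolyA n k) X P x) :=
    fun x => Prod.ext rfl (map_zero dP).symm
  let ψ : Y →ₗ[PolyA n k] P := LinearMap.snd (PolyA n k) X P ∘ₗ σ
  have hψ : IsHomog H GP 0 ψ := (isHomog_snd G GP).comp hσ rfl
  have hψd : ∀ y, ψ (dY y) = dP (ψ y) := fun y => congrArg Prod.snd (hσd y)
  refine ⟨LinearMap.fst (PolyA n k) X P ∘ₗ σ, (isHomog_fst G GP).comp hσ rfl,
    fun y => congrArg Prod.fst (hσd y), φ ∘ₗ t ∘ₗ LinearMap.inl (PolyA n k) X P,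
    (-ϖ) ∘ₗ c ∘ₗ ψ, hφ.comp (ht.comp (isHomog_inl G GP) (zero_add _)) (add_zero _),
    (H.isHomog_actionMap q hdY).neg.comp ((H.isHomog_shiftContraction q).comp hψ (zero_add _))
      (add_zero _), ?_, ?_⟩
  · rw [← comp_nullHomotopicMap hφd, ← nullHomotopicMap_comp hinl]
    ext x
    have h1 := congrArg Prod.fst (hσF (x, 0))
    rw [hF_apply, map_zero, add_zero] at h1
    simp only [LinearMap.sub_apply, LinearMap.comp_apply, LinearMap.fst_apply, LinearMap.id_apply]
    rw [h1, Prod.fst_sub, sub_sub_cancel_left]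
    rfl
  · rw [← comp_nullHomotopicMap (f := -ϖ) (dY := dP) fun v => by simp [hϖd],
      ← nullHomotopicMap_comp hψd, hc]
    ext y
    have h1 := hFσ y
    rw [hF_apply] at h1
    change f (σ y).1 - y = -ϖ (σ y).2
    rw [sub_eq_iff_eq_add, eq_neg_add_iff_add_eq, add_comm]
    exact h1

end BddGrading

/-- The grading projections of a bounded above `p`-DG module. -/
theorem PDG.exists_bddGrading {p n : ℕ} {k : Type} [Field k] (M : PDG p n k)
    (hbdd : ∃ n₀ : ℤ, ∀ m : ℤ, n₀ ≤ m → M.gr m = ⊥) :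
    ∃ G : BddGrading n k M.X, ∀ m x, G.proj m x = x ↔ x ∈ M.gr m := by
  classical
  let _ := M.internal.chooseDecomposition
  let π : ℤ → M.X →ₗ[k] M.X := fun m =>
    (M.gr m).subtype ∘ₗ DirectSum.component k ℤ (fun i => M.gr i) m ∘ₗ
      (DirectSum.decomposeLinearEquiv M.gr).toLinearMap
  have hπ : ∀ m x, π m x = (DirectSum.decompose M.gr x m : M.X) := fun m x => rfl
  have hmem : ∀ m x, π m x ∈ M.gr m := fun m x => (DirectSum.decompose M.gr x m).2
  have hsame : ∀ {m x}, x ∈ M.gr m → π m x = x := fun hx => by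
    rw [hπ, DirectSum.decompose_of_mem_same _ hx]
  have hne : ∀ {i j x}, x ∈ M.gr j → i ≠ j → π i x = 0 := fun hx hij => by
    rw [hπ, DirectSum.decompose_of_mem_ne _ hx hij.symm]
  refine ⟨⟨π, fun m x => hsame (hmem m x), fun i j x hij => hne (hmem j x) hij, fun x =>
    ⟨_, DirectSum.sum_support_decompose M.gr x⟩, fun i m x => ?_, ?_⟩,
    fun m x => ⟨fun h => h ▸ hmem m x, hsame⟩⟩
  · induction x using DirectSum.Decomposition.inductionOn M.gr with
    | zero => simp
    | @homogeneous j x =>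
      have hX := M.x_deg i j x x.2
      by_cases hj : m + 1 = j
      · subst hj
        rw [hsame x.2]
        rw [add_sub_cancel_right] at hX
        exact hsame hX
      · rw [hne x.2 hj, smul_zero]
        exact hne hX (by omega)
    | add x y hx hy => rw [smul_add, map_add, map_add, hx, hy, smul_add]
  · obtain ⟨b, hb⟩ := hbdd
    refine ⟨b, fun m hm x => ?_⟩
    have := hmem m x
    rwa [hb m hm, Submodule.mem_bot] at this

theorem PDG.dk_pow_apply {p n : ℕ} {k : Type} [Field k] (M : PDG p n k) (i : ℕ) (x : M.X) :
    (M.dk ^ i) x = (M.d ^ i) x := by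
  rw [Module.End.pow_apply, Module.End.pow_apply]
  rfl

theorem PDG.mem_range_sup_IMk {p n : ℕ} {k : Type} [Field k] (M : PDG p n k) (i : ℕ) (x : M.X) :
    x ∈ LinearMap.range (M.dk ^ i) ⊔ M.IMk ↔ ∃ y, x - (M.d ^ i) y ∈ augSubmodule n k M.X := by
  rw [Submodule.mem_sup]
  constructor
  · rintro ⟨_, ⟨y, rfl⟩, z, hz, rfl⟩
    refine ⟨y, ?_⟩
    rw [M.dk_pow_apply, add_sub_cancel_left]
    exact hz
  · rintro ⟨y, hy⟩
    exact ⟨_, ⟨y, rfl⟩, _, hy, by rw [M.dk_pow_apply, add_sub_cancel]⟩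

theorem stmt_17 (p n : ℕ) (hp : p.Prime) (k : Type) [Field k] [CharP k p]
    (M N : PDG p n k) (hfreeM : M.IsFree) (hfreeN : N.IsFree)
    (hbddM : ∃ n₀ : ℤ, ∀ m : ℤ, n₀ ≤ m → M.gr m = ⊥)
    (hbddN : ∃ n₀ : ℤ, ∀ m : ℤ, n₀ ≤ m → N.gr m = ⊥)
    (f : M.X →ₗ[PolyA n k] N.X)
    (hfdeg : ∀ m : ℤ, ∀ x ∈ M.gr m, f x ∈ N.gr m)
    (hfd : f ∘ₗ M.d = N.d ∘ₗ f)
    -- `f ⊗_A k` is injective on `ₛH` for all `1 ≤ s ≤ p-1` …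
    (hinj : ∀ s : ℕ, 1 ≤ s → s ≤ p - 1 → ∀ x : M.X, (M.dk ^ s) x ∈ M.IMk →
      f x ∈ LinearMap.range (N.dk ^ (p - s)) ⊔ N.IMk →
      x ∈ LinearMap.range (M.dk ^ (p - s)) ⊔ M.IMk)
    -- … and surjective on `ₛH` for all `1 ≤ s ≤ p-1`:
    (hsurj : ∀ s : ℕ, 1 ≤ s → s ≤ p - 1 → ∀ y : N.X, (N.dk ^ s) y ∈ N.IMk →
      ∃ x : M.X, (M.dk ^ s) x ∈ M.IMk ∧
        y - f x ∈ LinearMap.range (N.dk ^ (p - s)) ⊔ N.IMk) :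
    -- then `f` is a homotopy equivalence:
    ∃ g : N.X →ₗ[PolyA n k] M.X,
      (∀ m : ℤ, ∀ y ∈ N.gr m, g y ∈ M.gr m) ∧ g ∘ₗ N.d = M.d ∘ₗ g ∧
      ∃ (h₁ : M.X →ₗ[PolyA n k] M.X) (h₂ : N.X →ₗ[PolyA n k] N.X),
        (∀ m : ℤ, ∀ x ∈ M.gr m, h₁ x ∈ M.gr (m + p - 1)) ∧
        (∀ m : ℤ, ∀ y ∈ N.gr m, h₂ y ∈ N.gr (m + p - 1)) ∧
        g ∘ₗ f - LinearMap.id =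
          ∑ i ∈ Finset.range p, (M.d ^ (p - 1 - i)) ∘ₗ h₁ ∘ₗ (M.d ^ i) ∧
        f ∘ₗ g - LinearMap.id =
          ∑ i ∈ Finset.range p, (N.d ^ (p - 1 - i)) ∘ₗ h₂ ∘ₗ (N.d ^ i) := by
  obtain ⟨q, rfl⟩ := Nat.exists_eq_add_of_le' hp.one_le
  have hq : 1 ≤ q := Nat.le_of_succ_le_succ hp.two_le
  obtain ⟨_, _, bM, _⟩ := hfreeM
  obtain ⟨_, _, bN, _⟩ := hfreeN
  have := Module.Projective.of_basis bM
  have := Module.Projective.of_basis bN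
  obtain ⟨G, hG⟩ := M.exists_bddGrading hbddM
  obtain ⟨H, hH⟩ := N.exists_bddGrading hbddN
  have hdM : BddGrading.IsHomog G G (-1) M.d := BddGrading.isHomog_of_proj_map_proj fun m x =>
    (hG _ _).2 (M.d_deg m _ ((hG _ _).1 (G.proj_self m x)))
  have hdN : BddGrading.IsHomog H H (-1) N.d := BddGrading.isHomog_of_proj_map_proj fun m x =>
    (hH _ _).2 (N.d_deg m _ ((hH _ _).1 (H.proj_self m x)))
  have hf : BddGrading.IsHomog G H 0 f := BddGrading.isHomog_of_proj_map_proj fun m x => by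
    rw [add_zero]
    exact (hH _ _).2 (hfdeg m _ ((hG _ _).1 (G.proj_self m x)))
  obtain ⟨g, hg, hgd, h₁, h₂, hh₁, hh₂, e₁, e₂⟩ := BddGrading.exists_homotopyInverse hdM M.d_pow
    hdN N.d_pow hf (LinearMap.congr_fun hfd) (fun x hx hfx => by
      have := hinj 1 le_rfl (by omega) x (by rw [pow_one]; exact hx)
      rw [PDG.mem_range_sup_IMk, PDG.mem_range_sup_IMk] at this
      exact this hfx) (fun y hy => by
      obtain ⟨x, hx, hyx⟩ := hsurj q hq (by omega) y (by rw [N.dk_pow_apply]; exact hy)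
      rw [N.mem_range_sup_IMk, Nat.add_sub_cancel_left, pow_one] at hyx
      rw [M.dk_pow_apply] at hx
      exact ⟨x, hx, hyx⟩)
  refine ⟨g, fun m y hy => ?_, LinearMap.ext hgd, h₁, h₂, fun m x hx => ?_,
    fun m y hy => ?_, e₁, e₂⟩
  · have := hg m y
    rw [(hH m y).2 hy, add_zero] at this
    exact (hG _ _).1 this.symm
  · have := hh₁ m x
    rw [(hG m x).2 hx] at this
    rw [Nat.cast_add, Nat.cast_one, ← add_assoc, add_sub_cancel_right]
    exact (hG _ _).1 this.symm
  · have := hh₂ m y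
    rw [(hH m y).2 hy] at this
    rw [Nat.cast_add, Nat.cast_one, ← add_assoc, add_sub_cancel_right]
    exact (hH _ _).1 this.symm
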